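/- For all integers n ≥ 3 and k ≥ 2, and all integers i_1 ≥ i_2 ≥ ⋯ ≥ i_k with n−1 ≥ i_1 and i_k ≥ 0, define graphs H_1,…,H_k by H_j = P_{2n+1} if i_j = n−1 and H_j = P_{2i_j+3} if i_j ≤ n−2. Then GR(H_1,…,H_k) ≥ |H_1| + Σ_{j=2}^{k} i_j, where |H_1| = 2n+1 if i_1 = n−1 and |H_1| = 2i_1+3 otherwise. -/

import Mathlib

/-!
Lower bound construction. Give each vertex of `K_N` a label in `Fin k`, and colour an edge by the
larger of its two end labels. Among the three pairwise maxima of three labels two always coincide,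
so no triangle is rainbow. Every graph `H_j` is the path on `2 * i_j + 3` vertices
(`evenGraphP_eq`).

* For `j ≠ 0`, every edge of colour `j` has an end labelled `j`. A path on `2 * i_j + 3` vertices
  has a matching of size `i_j + 1`, so a copy in colour `j` needs more than `i_j` vertices
  labelled `j`.
* An edge has colour `0` only if both ends are labelled `0`, so a copy of `H_0` in colour `0` needs
  `2 * i_0 + 3` vertices labelled `0`.

If `N` is below the claimed bound, the labels can be chosen with at most `2 * i_0 + 2` vertices
labelled `0` and at most `i_j` vertices labelled `j` for every `j ≠ 0`, so no such copy exists.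
-/

/-- A Gallai coloring: an edge coloring of the complete graph on `Fin N` with colors
from `Fin k` containing no rainbow triangle. -/
def IsGallai {N k : ℕ} (c : Sym2 (Fin N) → Fin k) : Prop :=
  ∀ x y z : Fin N, x ≠ y → y ≠ z → x ≠ z →
    c s(x, y) = c s(y, z) ∨ c s(y, z) = c s(x, z) ∨ c s(x, y) = c s(x, z)

/-- The coloring `c` of the complete graph on `Fin N` contains a copy of the graph `H`
all of whose edges have color `i`. -/
def HasMonoCopy {N k V : ℕ} (c : Sym2 (Fin N) → Fin k)
    (H : SimpleGraph (Fin V)) (i : Fin k) : Prop :=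
  ∃ f : Fin V → Fin N, Function.Injective f ∧ ∀ u v, H.Adj u v → c s(f u, f v) = i

/-- Every Gallai k-coloring of the complete graph on `N` vertices contains a
monochromatic copy of `(H i)` in color `i` for some color `i`. -/
def GallaiRamseyProp {k : ℕ} (H : Fin k → Σ V : ℕ, SimpleGraph (Fin V)) (N : ℕ) : Prop :=
  ∀ c : Sym2 (Fin N) → Fin k, IsGallai c → ∃ i : Fin k, HasMonoCopy c (H i).2 i

/-- For `m ≤ n - 1`: the path `P_{2n+1}` if `m = n - 1`, and the path `P_{2m+3}` otherwise,
together with its number of vertices. -/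
def evenGraphP (n m : ℕ) : Σ V : ℕ, SimpleGraph (Fin V) :=
  if m = n - 1 then ⟨2 * n + 1, SimpleGraph.pathGraph (2 * n + 1)⟩
  else ⟨2 * m + 3, SimpleGraph.pathGraph (2 * m + 3)⟩

/-- The exceptional case `m = n - 1` of the definition is no exception:
`2 * n + 1 = 2 * (n - 1) + 3`. -/
theorem evenGraphP_eq {n : ℕ} (hn : 3 ≤ n) (m : ℕ) :
    evenGraphP n m = ⟨2 * m + 3, SimpleGraph.pathGraph (2 * m + 3)⟩ := by
  unfold evenGraphP
  split_ifs with h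
  · obtain rfl : n = m + 1 := by omega
    rfl
  · rfl

/-- The colouring of the edges by the larger of the two end labels. -/
def maxColoring {N k : ℕ} (l : Fin N → Fin k) : Sym2 (Fin N) → Fin k :=
  Sym2.lift ⟨fun x y => max (l x) (l y), fun _ _ => max_comm _ _⟩

@[simp]
theorem maxColoring_mk {N k : ℕ} (l : Fin N → Fin k) (x y : Fin N) :
    maxColoring l s(x, y) = max (l x) (l y) := rfl

theorem isGallai_maxColoring {N k : ℕ} (l : Fin N → Fin k) : IsGallai (maxColoring l) := by
  intro x y z _ _ _
  simp only [maxColoring_mk]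
  grind

/-- `N` vertices can be labelled with label `j` used at most `b j` times as soon as `N ≤ ∑ j, b j`.
The bound on each label class is expressed by saying that nothing larger injects into it. -/
theorem exists_labelling {N k : ℕ} (b : Fin k → ℕ) (h : N ≤ ∑ j, b j) :
    ∃ l : Fin N → Fin k, ∀ (j : Fin k) (M : ℕ) (g : Fin M → Fin N),
      Function.Injective g → (∀ t, l (g t) = j) → M ≤ b j := by
  obtain ⟨e⟩ : Nonempty (Fin N ↪ Σ j, Fin (b j)) :=
    Function.Embedding.nonempty_of_card_le (by simpa using h)
  refine ⟨fun x => (e x).1, fun j M g hg hl => ?_⟩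
  have hmem : ∀ t, ∃ y : Fin (b j), e (g t) = ⟨j, y⟩ := by
    intro t
    have := hl t
    dsimp only at this
    generalize e (g t) = p at this
    obtain ⟨a, y⟩ := p
    subst this
    exact ⟨y, rfl⟩
  choose y hy using hmem
  have hinj : Function.Injective y := fun s t hst =>
    hg (e.injective (by rw [hy, hy, hst]))
  simpa using Fintype.card_le_of_injective y hinj

/-- A path on `2 * m + 3` vertices in colour `j` forces `m + 1` vertices labelled `j`: one from
each edge of a matching of the path. -/
theorem exists_label_of_copy {N k m : ℕ} {l : Fin N → Fin k} {j : Fin k}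
    (h : HasMonoCopy (maxColoring l) (SimpleGraph.pathGraph (2 * m + 3)) j) :
    ∃ g : Fin (m + 1) → Fin N, Function.Injective g ∧ ∀ t, l (g t) = j := by
  obtain ⟨f, hf, hc⟩ := h
  have key : ∀ t : Fin (m + 1), ∃ u : Fin (2 * m + 3), u.val / 2 = t.val ∧ l (f u) = j := by
    intro t
    have := hc ⟨2 * t, by omega⟩ ⟨2 * t + 1, by omega⟩
      (SimpleGraph.pathGraph_adj.mpr (Or.inl rfl))
    rw [maxColoring_mk] at this
    rcases max_choice (l (f ⟨2 * t, by omega⟩)) (l (f ⟨2 * t + 1, by omega⟩)) with h | h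
    · exact ⟨⟨2 * t, by omega⟩, by simp, h ▸ this⟩
    · exact ⟨⟨2 * t + 1, by omega⟩, by simp only; omega, h ▸ this⟩
  choose u hu hl using key
  refine ⟨fun t => f (u t), fun s t hst => ?_, hl⟩
  have := hf hst
  exact Fin.ext (by rw [← hu s, ← hu t, this])

/-- All vertices of a path in the smallest colour carry the smallest label. -/
theorem label_eq_zero_of_copy {N k m : ℕ} {l : Fin N → Fin k} (hk : 0 < k)
    {f : Fin (2 * m + 3) → Fin N}
    (hc : ∀ u v, (SimpleGraph.pathGraph (2 * m + 3)).Adj u v →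
      maxColoring l s(f u, f v) = ⟨0, hk⟩) (u : Fin (2 * m + 3)) :
    l (f u) = ⟨0, hk⟩ := by
  obtain ⟨v, hv⟩ : ∃ v, (SimpleGraph.pathGraph (2 * m + 3)).Adj u v := by
    by_cases h : u.val = 0
    · exact ⟨⟨1, by omega⟩, SimpleGraph.pathGraph_adj.mpr (Or.inl (by simp [h]))⟩
    · exact ⟨⟨u - 1, by omega⟩,
        SimpleGraph.pathGraph_adj.mpr (Or.inr (by simp only; omega))⟩
  have h := hc u v hv
  rw [maxColoring_mk] at h
  have hle : l (f u) ≤ ⟨0, hk⟩ := h ▸ le_max_left _ _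
  exact Fin.ext (Nat.le_zero.mp hle)

theorem stmt_1 (n k : ℕ) (hn : 3 ≤ n) (hk : 2 ≤ k) (i : Fin k → ℕ)
    (hanti : Antitone i) (hi1 : i ⟨0, by omega⟩ ≤ n - 1) :
    ∀ N : ℕ, 0 < N → GallaiRamseyProp (fun j => evenGraphP n (i j)) N →
      (evenGraphP n (i ⟨0, by omega⟩)).1 +
        ∑ j ∈ Finset.univ.erase (⟨0, by omega⟩ : Fin k), i j ≤ N := by
  intro N _ hR
  simp only [evenGraphP_eq hn] at hR ⊢
  set z : Fin k := ⟨0, by omega⟩ with hz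
  by_contra! hlt
  -- The largest label class sizes that leave no room for a monochromatic copy.
  let b : Fin k → ℕ := fun j => if j = z then 2 * i z + 2 else i j
  have hsum : ∑ j, b j = 2 * i z + 2 + ∑ j ∈ Finset.univ.erase z, i j := by
    rw [← Finset.add_sum_erase _ _ (Finset.mem_univ z)]
    congr 1
    · exact Finset.sum_congr rfl fun j hj => if_neg (Finset.ne_of_mem_erase hj)
  obtain ⟨l, hl⟩ := exists_labelling (N := N) b (by omega)
  obtain ⟨j, hj⟩ := hR (maxColoring l) (isGallai_maxColoring l)
  by_cases hjz : j = z
  · subst hjz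
    obtain ⟨f, hf, hc⟩ := hj
    have := hl z _ f hf (label_eq_zero_of_copy (by omega) hc)
    simp [b] at this
  · obtain ⟨g, hg, hgl⟩ := exists_label_of_copy hj
    have := hl j _ g hg hgl
    simp [b, hjz] at this
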